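/- Let H⁽²⁾ be the Hessian of the doubled system, i.e. of the periodic linear discrete Lagrangian system of period 2n defined by the same matrices (A_i), (B_i) regarded as 2n-periodic. Then ind(H⁽²⁾) = ind(H) + ind(H_{−1}). Consequently, if H_{−1} is invertible and σ · (−1)^{ind(H⁽²⁾) − ind(H)} < 0, where σ = sign(∏_{i=1}^n det B_i), then the monodromy matrix P has a real eigenvalue ρ < −1 (the periodic trajectory is exponentially unstable). -/

import Mathlib

open Matrix BigOperators

/-- The transfer matrix `T_i` of a periodic linear discrete Lagrangian system. -/
noncomputable def transferMatrix (m : ℕ) (A B : ℤ → Matrix (Fin m) (Fin m) ℝ) (i : ℤ) :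
    Matrix (Fin m ⊕ Fin m) (Fin m ⊕ Fin m) ℝ :=
  Matrix.fromBlocks 0 1 (-(((B i)ᵀ)⁻¹ * B (i - 1))) (((B i)ᵀ)⁻¹ * A i)

/-- The monodromy matrix `P = T_n ⋯ T_1`. -/
noncomputable def monodromy (m n : ℕ) (A B : ℤ → Matrix (Fin m) (Fin m) ℝ) :
    Matrix (Fin m ⊕ Fin m) (Fin m ⊕ Fin m) ℝ :=
  (List.range n).foldl (fun M i => transferMatrix m A B ((i : ℤ) + 1) * M) 1

/-- The Hessian of a system of period `N` (cyclic conventions). -/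
noncomputable def hessian (m N : ℕ) [NeZero N] (A B : ℤ → Matrix (Fin m) (Fin m) ℝ) :
    Matrix (Fin N × Fin m) (Fin N × Fin m) ℝ :=
  fun p q =>
    (if q.1 = p.1 then A ((p.1 : ℕ) : ℤ) p.2 q.2 else 0)
    + (if q.1 = p.1 - 1 then -(B (((p.1 : ℕ) : ℤ) - 1) p.2 q.2) else 0)
    + (if q.1 = p.1 + 1 then -(B ((p.1 : ℕ) : ℤ) q.2 p.2) else 0)

/-- The `ρ`-Hessian at `ρ = -1` (antiperiodic conventions). -/
noncomputable def hessianNeg (m n : ℕ) [NeZero n] (A B : ℤ → Matrix (Fin m) (Fin m) ℝ) :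
    Matrix (Fin n × Fin m) (Fin n × Fin m) ℝ :=
  fun p q =>
    (if q.1 = p.1 then A ((p.1 : ℕ) : ℤ) p.2 q.2 else 0)
    + (if q.1 = p.1 - 1 then
        -((if (p.1 : ℕ) = 0 then (-1 : ℝ) else 1) * B (((p.1 : ℕ) : ℤ) - 1) p.2 q.2) else 0)
    + (if q.1 = p.1 + 1 then
        -((if (p.1 : ℕ) = n - 1 then (-1 : ℝ) else 1) * B ((p.1 : ℕ) : ℤ) q.2 p.2) else 0)

/-- The (Morse) index of a real symmetric matrix: the number of its negative
eigenvalues counted with multiplicity. -/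
noncomputable def matIndex {N : Type*} [Fintype N] (Q : Matrix N N ℝ) : ℕ :=
  sSup {d : ℕ | ∃ W : Submodule ℝ (N → ℝ), Module.finrank ℝ W = d ∧
    ∀ x ∈ W, x ≠ 0 → x ⬝ᵥ Q *ᵥ x < 0}

/-!
In the orthonormal coordinates `(u + v) / √2`, `(u - v) / √2` on pairs of periods, the Hessian of
the doubled system is the direct sum of the periodic Hessian `H` and the antiperiodic one `H₋₁`,
which gives the additivity of the index.

Hill's formula identifies `det H₋₁` with `∏ det B_i * det (1 + P)`: eliminating the sites one after
the other turns the block cyclic determinant into that of `1 + P`. As `(-1) ^ ind H₋₁` is the sign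
of `det H₋₁`, the sign condition says `det (1 + P) < 0`. The monic characteristic polynomial of `-P`
is therefore negative at `1` and has a root beyond `1`, that is, `P` has an eigenvalue below `-1`.
-/

open scoped Kronecker

section MorseIndex

lemma sigNeg_prod {𝕜 V W : Type*} [Field 𝕜] [LinearOrder 𝕜] [IsStrictOrderedRing 𝕜]
    [AddCommGroup V] [Module 𝕜 V] [FiniteDimensional 𝕜 V]
    [AddCommGroup W] [Module 𝕜 W] [FiniteDimensional 𝕜 W]
    (Q : QuadraticForm 𝕜 V) (R : QuadraticForm 𝕜 W) :
    sigNeg (Q.prod R) = sigNeg Q + sigNeg R := by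
  have : Invertible (2 : 𝕜) := invertibleOfNonzero two_ne_zero
  obtain ⟨v, hQ⟩ := QuadraticForm.equivalent_weightedSumSquares Q
  obtain ⟨w, hR⟩ := QuadraticForm.equivalent_weightedSumSquares R
  have hprod : ((QuadraticMap.weightedSumSquares 𝕜 v).prod
      (QuadraticMap.weightedSumSquares 𝕜 w)).Equivalent
      (QuadraticMap.weightedSumSquares 𝕜 (Sum.elim v w)) :=
    ⟨{ (LinearEquiv.sumArrowLequivProdArrow _ _ 𝕜 𝕜).symm with
        map_app' := fun x => by
          simp only [QuadraticMap.weightedSumSquares_apply, QuadraticMap.prod_apply,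
            Fintype.sum_sum_type]
          rfl }⟩
  have hneg : {i | Sum.elim v w i < 0} =
      Sum.inl '' {i | v i < 0} ∪ Sum.inr '' {i | w i < 0} := by
    ext (i | i) <;> simp
  rw [QuadraticForm.sigNeg_of_equiv_weightedSumSquares ((hQ.prod hR).trans hprod),
    QuadraticForm.sigNeg_of_equiv_weightedSumSquares hQ,
    QuadraticForm.sigNeg_of_equiv_weightedSumSquares hR, hneg,
    Set.ncard_union_eq Set.disjoint_image_inl_image_inr,
    Set.ncard_image_of_injective _ Sum.inl_injective,
    Set.ncard_image_of_injective _ Sum.inr_injective]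

variable {ι κ : Type*} [Fintype ι] [Fintype κ]

lemma toQuadraticForm'_apply [DecidableEq ι] {R : Type*} [CommRing R] (Q : Matrix ι ι R)
    (x : ι → R) :
    Q.toQuadraticForm' x = x ⬝ᵥ Q *ᵥ x :=
  Matrix.toLinearMap₂'_apply' Q x x

lemma matIndex_eq_sigNeg [DecidableEq ι] (Q : Matrix ι ι ℝ) :
    matIndex Q = sigNeg Q.toQuadraticForm' := by
  rw [matIndex, ← (sigNeg_isGreatest Q.toQuadraticForm').csSup_eq]
  simp [QuadraticMap.PosDef, toQuadraticForm'_apply]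

lemma matIndex_eq_of_linearEquiv {Q : Matrix ι ι ℝ} {R : Matrix κ κ ℝ}
    (e : (ι → ℝ) ≃ₗ[ℝ] (κ → ℝ)) (h : ∀ x, e x ⬝ᵥ R *ᵥ e x = x ⬝ᵥ Q *ᵥ x) :
    matIndex Q = matIndex R := by
  classical
  rw [matIndex_eq_sigNeg, matIndex_eq_sigNeg]
  exact QuadraticMap.Equivalent.sigNeg_eq
    ⟨{ e with map_app' := fun x => by simpa [toQuadraticForm'_apply] using h x }⟩

lemma matIndex_fromBlocks_diagonal (Q : Matrix ι ι ℝ) (R : Matrix κ κ ℝ) :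
    matIndex (fromBlocks Q 0 0 R) = matIndex Q + matIndex R := by
  classical
  rw [matIndex_eq_sigNeg, matIndex_eq_sigNeg, matIndex_eq_sigNeg, ← sigNeg_prod]
  refine QuadraticMap.Equivalent.sigNeg_eq (QuadraticMap.Equivalent.symm
    ⟨{ (LinearEquiv.sumArrowLequivProdArrow ι κ ℝ ℝ).symm with map_app' := fun ⟨u, v⟩ => ?_ }⟩)
  have huv : (LinearEquiv.sumArrowLequivProdArrow ι κ ℝ ℝ).symm (u, v) = Sum.elim u v := rfl
  simp [huv, toQuadraticForm'_apply, fromBlocks_mulVec]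

lemma matIndex_conj [DecidableEq ι] [DecidableEq κ] (Q : Matrix ι ι ℝ)
    {S : Matrix ι κ ℝ} {T : Matrix κ ι ℝ} (hST : S * T = 1) (hTS : T * S = 1) :
    matIndex (Sᵀ * Q * S) = matIndex Q :=
  matIndex_eq_of_linearEquiv (Matrix.toLin'OfInv hTS hST) fun x => by
    have hx : Matrix.toLin'OfInv hTS hST x = S *ᵥ x := rfl
    rw [hx, ← mulVec_mulVec, ← mulVec_mulVec, dotProduct_mulVec x, vecMul_transpose]

lemma matIndex_submatrix (Q : Matrix ι ι ℝ) (e : κ ≃ ι) :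
    matIndex (Q.submatrix e e) = matIndex Q :=
  (matIndex_eq_of_linearEquiv (LinearEquiv.funCongrLeft ℝ ℝ e) fun x => by
    have hx : LinearEquiv.funCongrLeft ℝ ℝ e x = x ∘ e := rfl
    rw [hx, submatrix_mulVec_equiv, Function.comp_assoc, e.self_comp_symm, Function.comp_id,
      comp_equiv_dotProduct_comp_equiv]).symm

lemma matIndex_fromBlocks_same (X Y : Matrix ι ι ℝ) :
    matIndex (fromBlocks X Y Y X) = matIndex (X + Y) + matIndex (X - Y) := by
  classical
  set S : Matrix (ι ⊕ ι) (ι ⊕ ι) ℝ := (√2)⁻¹ • fromBlocks 1 1 1 (-1) with hS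
  have hsq : (√2)⁻¹ * (√2)⁻¹ = (2 : ℝ)⁻¹ := by
    rw [← mul_inv, Real.mul_self_sqrt zero_le_two]
  have hSS : S * S = 1 := by
    have hhalf : (2⁻¹ : ℝ) • (1 : Matrix ι ι ℝ) + (2⁻¹ : ℝ) • 1 = 1 := by
      rw [← add_smul]; norm_num
    simp [hS, hsq, fromBlocks_multiply, fromBlocks_smul, smul_smul, hhalf]
  have hconj : Sᵀ * fromBlocks (X + Y) 0 0 (X - Y) * S = fromBlocks X Y Y X := by
    have hX : (2⁻¹ : ℝ) • (X + Y) + (2⁻¹ : ℝ) • (X - Y) = X := by module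
    have hY : (2⁻¹ : ℝ) • (X + Y) + -((2⁻¹ : ℝ) • (X - Y)) = Y := by module
    simp [hS, hsq, fromBlocks_multiply, fromBlocks_smul, fromBlocks_transpose, smul_smul,
      -smul_add, hX, hY]
  rw [← hconj, matIndex_conj _ hSS hSS, matIndex_fromBlocks_diagonal]

lemma matIndex_diagonal [DecidableEq ι] (w : ι → ℝ) :
    matIndex (diagonal w) = {i | w i < 0}.ncard := by
  have h : (diagonal w).toQuadraticForm' = QuadraticMap.weightedSumSquares ℝ w := by
    ext x
    simp [toQuadraticForm'_apply, QuadraticMap.weightedSumSquares_apply, dotProduct,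
      mulVec_diagonal, mul_left_comm]
  rw [matIndex_eq_sigNeg, h]
  exact QuadraticForm.sigNeg_of_equiv_weightedSumSquares (.refl _)

lemma matIndex_eq_ncard_eigenvalues_neg [DecidableEq ι] {Q : Matrix ι ι ℝ} (hQ : Q.IsHermitian) :
    matIndex Q = {i | hQ.eigenvalues i < 0}.ncard := by
  set U : Matrix ι ι ℝ := hQ.eigenvectorUnitary.1
  have hstar : star U = Uᵀ := by
    rw [star_eq_conjTranspose, conjTranspose_eq_transpose_of_trivial]
  have hUU : U * Uᵀ = 1 := hstar ▸ Unitary.coe_mul_star_self hQ.eigenvectorUnitary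
  have hUU' : Uᵀ * U = 1 := hstar ▸ Unitary.coe_star_mul_self hQ.eigenvectorUnitary
  have hspec : Uᵀ * Q * U = diagonal hQ.eigenvalues := by
    rw [← hstar]
    simpa [Unitary.conjStarAlgAut_apply] using hQ.conjStarAlgAut_star_eigenvectorUnitary
  rw [← matIndex_diagonal, ← hspec, matIndex_conj Q hUU hUU']

lemma neg_one_pow_ncard_mul_prod_pos {R : Type*} [CommRing R] [LinearOrder R]
    [IsStrictOrderedRing R] {w : ι → R} (hw : ∀ i, w i ≠ 0) :
    0 < (-1) ^ {i | w i < 0}.ncard * ∏ i, w i := by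
  classical
  have h : (-1 : R) ^ {i | w i < 0}.ncard = ∏ i, if w i < 0 then -1 else 1 := by
    rw [Finset.prod_ite]
    simp [Set.ncard_eq_toFinset_card']
  rw [h, ← Finset.prod_mul_distrib]
  refine Finset.prod_pos fun i _ => ?_
  split_ifs with hi
  · linarith
  · simpa using lt_of_le_of_ne (not_lt.mp hi) (hw i).symm

lemma neg_one_pow_matIndex_mul_det_pos [DecidableEq ι] {Q : Matrix ι ι ℝ} (hQ : Q.IsHermitian)
    (hdet : IsUnit Q.det) : 0 < (-1) ^ matIndex Q * Q.det := by
  have hprod : Q.det = ∏ i, hQ.eigenvalues i := by simpa using hQ.det_eq_prod_eigenvalues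
  rw [matIndex_eq_ncard_eigenvalues_neg hQ, hprod]
  exact neg_one_pow_ncard_mul_prod_pos fun i =>
    Finset.prod_ne_zero_iff.mp (hprod ▸ hdet.ne_zero) i (Finset.mem_univ i)

end MorseIndex

section TwistedShift

variable {R : Type*} [CommRing R] {n : ℕ}

/-- The splitting of a doubled period into its first and second halves. -/
def twoPeriods (n : ℕ) : Fin n ⊕ Fin n ≃ Fin (2 * n) :=
  finSumFinEquiv.trans (finCongr (two_mul n).symm)

lemma twoPeriods_inl_val (i : Fin n) : (twoPeriods n (.inl i) : ℕ) = i := by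
  simp [twoPeriods]

lemma twoPeriods_inr_val (i : Fin n) : (twoPeriods n (.inr i) : ℕ) = i + n := by
  simp [twoPeriods, add_comm]

/-- The splitting of the sites of a doubled system into its two periods. -/
def doubledSites (k : Type*) (n : ℕ) : (k × Fin n) ⊕ (k × Fin n) ≃ k × Fin (2 * n) :=
  (Equiv.prodSumDistrib k _ _).symm.trans (Equiv.prodCongr (.refl k) (twoPeriods n))

lemma doubledSites_inl {k : Type*} (a : k) (i : Fin n) :
    doubledSites k n (.inl (a, i)) = (a, twoPeriods n (.inl i)) :=
  rfl

lemma doubledSites_inr {k : Type*} (a : k) (i : Fin n) :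
    doubledSites k n (.inr (a, i)) = (a, twoPeriods n (.inr i)) :=
  rfl

variable [NeZero n]

/-- The cyclic shift `(S u) i = u (i - 1)` on sequences of length `n`, with the wrap-around entry
twisted by `c`, so that `u (-1) = c * u (n - 1)`. -/
def twistedShift (n : ℕ) [NeZero n] (c : R) : Matrix (Fin n) (Fin n) R :=
  diagonal (fun i => if i = 0 then c else 1) * (finRotate n)⁻¹.permMatrix R

lemma twistedShift_apply (c : R) (i j : Fin n) :
    twistedShift n c i j = if j = i - 1 then if i = 0 then c else 1 else 0 := by
  simp [twistedShift, PEquiv.toMatrix_apply, Equiv.toPEquiv_apply, Equiv.Perm.inv_def,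
    eq_comm (a := j)]

lemma twistedShift_apply_val (c : R) (i j : Fin n) :
    twistedShift n c i j =
      if (i : ℕ) = j + 1 then 1 else if (i : ℕ) = 0 ∧ (j : ℕ) + 1 = n then c else 0 := by
  have hi : ((i - 1 : Fin n) : ℕ) = if (i : ℕ) = 0 then n - 1 else (i : ℕ) - 1 := by
    split_ifs with h
    · obtain ⟨n, rfl⟩ := Nat.exists_eq_succ_of_ne_zero (NeZero.ne n)
      rw [Fin.coe_sub_one, if_pos (Fin.val_eq_zero_iff.mp h), Nat.succ_sub_one]
    · exact Fin.val_sub_one_of_ne_zero (Fin.val_ne_zero_iff.mp h)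
  simp only [twistedShift_apply, Fin.ext_iff, hi, Fin.val_zero]
  split_ifs <;> first | rfl | omega

lemma twistedShift_mul_transpose {c d : R} (h : c * d = 1) :
    twistedShift n c * (twistedShift n d)ᵀ = 1 := by
  have hperm : (finRotate n)⁻¹.permMatrix R * ((finRotate n)⁻¹.permMatrix R)ᵀ = 1 := by
    rw [transpose_permMatrix, ← permMatrix_mul, inv_mul_cancel, permMatrix_one]
  have hdiag (i : Fin n) : (if i = 0 then c else 1) * (if i = 0 then d else 1) = 1 := by
    split_ifs <;> simp [h]
  rw [twistedShift, twistedShift, transpose_mul, Matrix.mul_assoc, ← Matrix.mul_assoc _ _ᵀ,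
    hperm, Matrix.one_mul, diagonal_transpose, diagonal_mul_diagonal]
  simp only [hdiag, diagonal_one]

lemma det_twistedShift (c : R) : (twistedShift n c).det = (-1) ^ (n - 1) * c := by
  simp [twistedShift, Finset.prod_ite_eq', mul_comm]

lemma twistedShift_twoPeriods (c : R) (x y : Fin n ⊕ Fin n) :
    twistedShift (2 * n) c (twoPeriods n x) (twoPeriods n y) =
      fromBlocks (twistedShift n 0) (twistedShift n c - twistedShift n 0)
        (twistedShift n 1 - twistedShift n 0) (twistedShift n 0) x y := by
  rcases x with i | i <;> rcases y with j | j <;>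
    simp only [fromBlocks_apply₁₁, fromBlocks_apply₁₂, fromBlocks_apply₂₁,
      fromBlocks_apply₂₂, Matrix.sub_apply, twistedShift_apply_val, twoPeriods_inl_val,
      twoPeriods_inr_val] <;>
    split_ifs <;> first | lia | simp

end TwistedShift

section BlockCyclic

variable {R : Type*} [CommRing R] {k o : Type*} [Fintype k] [DecidableEq k] [Fintype o]
  [DecidableEq o]

lemma blockDiagonal_mul_one_kronecker_apply (M : o → Matrix k k R) (S : Matrix o o R)
    (p q : k × o) :
    (blockDiagonal M * ((1 : Matrix k k R) ⊗ₖ S)) p q = S p.2 q.2 * M p.2 p.1 q.1 := by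
  simp [mul_apply, blockDiagonal_apply, one_apply, Fintype.sum_prod_type, mul_comm]

lemma one_kronecker_mul_blockDiagonal_apply (S : Matrix o o R) (M : o → Matrix k k R)
    (p q : k × o) :
    (((1 : Matrix k k R) ⊗ₖ S) * blockDiagonal M) p q = S p.2 q.2 * M q.2 p.1 q.1 := by
  simp [mul_apply, blockDiagonal_apply, one_apply, Fintype.sum_prod_type]

end BlockCyclic

section TwistedHessian

variable {R k : Type*} [CommRing R] [Fintype k] [DecidableEq k]

/-- The block Jacobi matrix of the quadratic form of a linear discrete Lagrangian system on
sequences of length `n`, with the boundary conventions `u (-1) = c • u (n - 1)` and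
`u n = d • u 0`. The sites are numbered from `0` and form the second coordinate of the index. -/
def twistedHessian (n : ℕ) [NeZero n] (c d : R) (A B : ℤ → Matrix k k R) :
    Matrix (k × Fin n) (k × Fin n) R :=
  blockDiagonal (fun i : Fin n => A (i : ℕ))
    - blockDiagonal (fun i : Fin n => B ((i : ℕ) - 1)) * (1 ⊗ₖ twistedShift n c)
    - blockDiagonal (fun i : Fin n => (B (i : ℕ))ᵀ) * (1 ⊗ₖ (twistedShift n d)ᵀ)

variable {n : ℕ} [NeZero n]

lemma twistedHessian_apply (c d : R) (A B : ℤ → Matrix k k R) (p q : k × Fin n) :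
    twistedHessian n c d A B p q =
      (if p.2 = q.2 then A (p.2 : ℕ) p.1 q.1 else 0)
        - twistedShift n c p.2 q.2 * B ((p.2 : ℕ) - 1) p.1 q.1
        - twistedShift n d q.2 p.2 * B (p.2 : ℕ) q.1 p.1 := by
  simp only [twistedHessian, Matrix.sub_apply, blockDiagonal_mul_one_kronecker_apply,
    blockDiagonal_apply, transpose_apply]

lemma twistedHessian_neg_neg (c d : R) (A B : ℤ → Matrix k k R) :
    twistedHessian n (-c) (-d) A B =
      twistedHessian n 0 0 A B - (twistedHessian n c d A B - twistedHessian n 0 0 A B) := by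
  ext p q
  simp only [Matrix.sub_apply, twistedHessian_apply, twistedShift_apply_val]
  split_ifs <;> ring

lemma twistedShift_intertwine {B : ℤ → Matrix k k R} (hB : ∀ i, B (i + n) = B i) (c : R) :
    blockDiagonal (fun i : Fin n => B ((i : ℕ) - 1)) * (1 ⊗ₖ twistedShift n c) =
      (1 ⊗ₖ twistedShift n c) * blockDiagonal (fun i : Fin n => B (i : ℕ)) := by
  ext ⟨a, i⟩ ⟨b, j⟩
  rw [blockDiagonal_mul_one_kronecker_apply, one_kronecker_mul_blockDiagonal_apply,
    twistedShift_apply_val]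
  dsimp only
  split_ifs with hij hij
  · rw [hij, Nat.cast_succ, add_sub_cancel_right]
  · have : (j : ℤ) = (i : ℕ) - 1 + n := by lia
    rw [this, hB]
  · simp

lemma transpose_twistedHessian {A B : ℤ → Matrix k k R} (hA : ∀ i, (A i)ᵀ = A i)
    (hB : ∀ i, B (i + n) = B i) (c d : R) :
    (twistedHessian n c d A B)ᵀ = twistedHessian n d c A B := by
  rw [twistedHessian, twistedHessian, twistedShift_intertwine hB, twistedShift_intertwine hB]
  simp only [transpose_sub, transpose_mul, blockDiagonal_transpose, ← kroneckerMap_transpose, hA,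
    transpose_transpose, transpose_one, sub_right_comm]

lemma hessian_eq_twistedHessian {m : ℕ} (A B : ℤ → Matrix (Fin m) (Fin m) ℝ) :
    hessian m n A B =
      (twistedHessian n 1 1 A B).submatrix (Equiv.prodComm _ _) (Equiv.prodComm _ _) := by
  ext ⟨i, a⟩ ⟨j, b⟩
  have hij : i = j - 1 ↔ j = i + 1 := by rw [eq_sub_iff_add_eq, eq_comm]
  simp only [hessian, submatrix_apply, Equiv.prodComm_apply, Prod.swap_prod_mk,
    twistedHessian_apply, twistedShift_apply, hij, eq_comm (a := i) (b := j)]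
  split_ifs <;> ring

lemma hessianNeg_eq_twistedHessian {m : ℕ} (A B : ℤ → Matrix (Fin m) (Fin m) ℝ) :
    hessianNeg m n A B =
      (twistedHessian n (-1) (-1) A B).submatrix (Equiv.prodComm _ _) (Equiv.prodComm _ _) := by
  ext ⟨i, a⟩ ⟨j, b⟩
  have hij : i = j - 1 ↔ j = i + 1 := by rw [eq_sub_iff_add_eq, eq_comm]
  have hlast : (i : ℕ) = n - 1 ↔ i + 1 = 0 := by
    obtain ⟨n, rfl⟩ := Nat.exists_eq_succ_of_ne_zero (NeZero.ne n)
    rw [← eq_neg_iff_add_eq_zero, ← Fin.neg_last, neg_neg, Fin.ext_iff, Fin.val_last,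
      Nat.succ_sub_one]
  simp only [hessianNeg, submatrix_apply, Equiv.prodComm_apply, Prod.swap_prod_mk,
    twistedHessian_apply, twistedShift_apply, hij, eq_comm (a := i) (b := j), hlast,
    Fin.val_eq_zero_iff]
  rcases eq_or_ne j (i + 1) with rfl | hj
  · split_ifs <;> ring
  · simp only [if_neg hj]
    split_ifs <;> ring

lemma twistedHessian_submatrix_doubledSites {A B : ℤ → Matrix k k R} (hA : ∀ i, A (i + n) = A i)
    (hB : ∀ i, B (i + n) = B i) :
    (twistedHessian (2 * n) 1 1 A B).submatrix (doubledSites k n) (doubledSites k n) =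
      fromBlocks (twistedHessian n 0 0 A B)
        (twistedHessian n 1 1 A B - twistedHessian n 0 0 A B)
        (twistedHessian n 1 1 A B - twistedHessian n 0 0 A B)
        (twistedHessian n 0 0 A B) := by
  have hB' (i : ℤ) : B (i + n - 1) = B (i - 1) := by rw [add_sub_right_comm, hB]
  ext (⟨a, i⟩ | ⟨a, i⟩) (⟨b, j⟩ | ⟨b, j⟩) <;>
    simp only [submatrix_apply, doubledSites_inl, doubledSites_inr, twistedHessian_apply,
      EmbeddingLike.apply_eq_iff_eq, Sum.inl.injEq, Sum.inr.injEq, reduceCtorEq, if_false,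
      twoPeriods_inl_val, twoPeriods_inr_val, Nat.cast_add, hA, hB, hB', twistedShift_twoPeriods,
      fromBlocks_apply₁₁, fromBlocks_apply₁₂, fromBlocks_apply₂₁, fromBlocks_apply₂₂,
      Matrix.sub_apply] <;>
    ring

lemma matIndex_hessian_two_mul {m : ℕ} {A B : ℤ → Matrix (Fin m) (Fin m) ℝ}
    (hA : ∀ i, A (i + n) = A i) (hB : ∀ i, B (i + n) = B i) :
    matIndex (hessian m (2 * n) A B) =
      matIndex (hessian m n A B) + matIndex (hessianNeg m n A B) := by
  rw [hessian_eq_twistedHessian, hessian_eq_twistedHessian, hessianNeg_eq_twistedHessian,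
    matIndex_submatrix, matIndex_submatrix, matIndex_submatrix,
    ← matIndex_submatrix _ (doubledSites (Fin m) n), twistedHessian_submatrix_doubledSites hA hB,
    matIndex_fromBlocks_same, add_sub_cancel, ← twistedHessian_neg_neg]

lemma isHermitian_hessianNeg {m : ℕ} {A B : ℤ → Matrix (Fin m) (Fin m) ℝ}
    (hA : ∀ i, (A i)ᵀ = A i) (hB : ∀ i, B (i + n) = B i) : (hessianNeg m n A B).IsHermitian := by
  rw [hessianNeg_eq_twistedHessian, IsHermitian, conjTranspose_eq_transpose_of_trivial,
    transpose_submatrix, transpose_twistedHessian hA hB]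

end TwistedHessian

section CyclicProduct

/-- The ordered product `T (n - 1) * ⋯ * T 0`. -/
def orderedProd {M : Type*} [Monoid M] (T : ℕ → M) : ℕ → M
  | 0 => 1
  | n + 1 => T n * orderedProd T n

lemma orderedProd_succ_eq_mul_zero {M : Type*} [Monoid M] (T : ℕ → M) (n : ℕ) :
    orderedProd T (n + 1) = orderedProd (fun i => T (i + 1)) n * T 0 := by
  induction n with
  | zero => simp [orderedProd]
  | succ n ih => rw [orderedProd, ih, orderedProd, mul_assoc]

lemma orderedProd_eq_foldl {M : Type*} [Monoid M] (T : ℕ → M) (n : ℕ) :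
    orderedProd T n = (List.range n).foldl (fun x i => T i * x) 1 := by
  induction n with
  | zero => rfl
  | succ n ih => rw [orderedProd, ih, List.range_succ, List.foldl_concat]

variable {R k : Type*} [CommRing R] [Fintype k] [DecidableEq k]

lemma det_one_sub_smul_orderedProd_rotate (T : ℕ → Matrix k k R) {n : ℕ} (hT : T n = T 0)
    (c : R) :
    (1 - c • orderedProd (fun i => T (i + 1)) n).det = (1 - c • orderedProd T n).det := by
  cases n with
  | zero => rfl
  | succ n =>
    rw [orderedProd_succ_eq_mul_zero T, orderedProd, hT, ← Matrix.mul_smul,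
      det_one_sub_mul_comm, Matrix.smul_mul]

lemma det_one_sub_of_strictBlockTriangular {α : Type*} [LinearOrder α] {N : Matrix k k R}
    {b : k → α} (hN : ∀ i j, b j ≤ b i → N i j = 0) : (1 - N).det = 1 := by
  have htri : (1 - N).BlockTriangular b := fun i j hij => by
    rw [Matrix.sub_apply, hN i j hij.le, one_apply_ne (by rintro rfl; exact hij.false), sub_zero]
  have hblock (a : α) : (1 - N).toSquareBlock b a = 1 := by
    ext i j
    simp [toSquareBlock_def, hN i j (j.2.trans i.2.symm).le, one_apply, Subtype.ext_iff]
  rw [htri.det]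
  simp [hblock]

variable {n : ℕ} [NeZero n]

lemma one_sub_twistedShift_zero_mul_orderedProd (T : ℕ → Matrix k k R) :
    (1 - (1 ⊗ₖ twistedShift n 0) * blockDiagonal (fun i : Fin n => T i)) *
        (of fun p b => orderedProd T p.2 p.1 b : Matrix (k × Fin n) k R) =
      of fun p b => if p.2 = 0 then (1 : Matrix k k R) p.1 b else 0 := by
  ext ⟨a, i⟩ b
  rw [Matrix.sub_mul, Matrix.one_mul, Matrix.sub_apply, Matrix.mul_apply]
  simp only [of_apply, one_kronecker_mul_blockDiagonal_apply, Fintype.sum_prod_type,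
    twistedShift_apply]
  by_cases hi : i = 0
  · simp [hi, orderedProd]
  · have hval : (i : ℕ) = (i - 1 : Fin n) + 1 := by
      have := Fin.val_ne_zero_iff.mpr hi
      rw [Fin.val_sub_one_of_ne_zero hi]
      lia
    simp [hi, hval, orderedProd, Matrix.mul_apply]

-- With `Z_c = 1 ⊗ twistedShift n c` and `T` read as a block diagonal matrix, `1 - Z_c T` is a
-- perturbation of rank at most `card k` of the unipotent `1 - Z_0 T`, whose inverse has the partial
-- products of `T` in its first block column; `det (1 - F E) = det (1 - E F)` does the rest.
lemma det_one_sub_twistedShift_mul_blockDiagonal (T : ℕ → Matrix k k R) (c : R) :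
    (1 - (1 ⊗ₖ twistedShift n c) * blockDiagonal (fun i : Fin n => T i)).det =
      (1 - c • orderedProd T n).det := by
  set L : Matrix (k × Fin n) (k × Fin n) R :=
    1 - (1 ⊗ₖ twistedShift n 0) * blockDiagonal (fun i : Fin n => T i) with hL
  let F : Matrix (k × Fin n) k R := of fun p b => orderedProd T p.2 p.1 b
  let E : Matrix k (k × Fin n) R :=
    of fun a q => if (q.2 : ℕ) + 1 = n then c * T q.2 a q.1 else 0
  have hL_det : L.det = 1 := by
    refine det_one_sub_of_strictBlockTriangular (b := fun p => OrderDual.toDual p.2)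
      fun p q hpq => ?_
    have hpq : (p.2 : ℕ) ≤ q.2 := hpq
    rw [one_kronecker_mul_blockDiagonal_apply, twistedShift_apply_val, if_neg (by lia), ite_self,
      zero_mul]
  have hfactor : 1 - (1 ⊗ₖ twistedShift n c) * blockDiagonal (fun i : Fin n => T i) =
      L * (1 - F * E) := by
    rw [Matrix.mul_sub, ← Matrix.mul_assoc, one_sub_twistedShift_zero_mul_orderedProd,
      Matrix.mul_one, hL, sub_sub]
    congr 1
    ext ⟨a, i⟩ ⟨b, j⟩
    rw [Matrix.add_apply, one_kronecker_mul_blockDiagonal_apply,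
      one_kronecker_mul_blockDiagonal_apply, twistedShift_apply_val, twistedShift_apply_val,
      Matrix.mul_apply]
    simp only [E, of_apply, one_apply, ← Fin.val_eq_zero_iff]
    by_cases hi : (i : ℕ) = 0 <;> by_cases hj : (j : ℕ) + 1 = n <;> simp [hi, hj, NeZero.ne' n]
  have hEF : E * F = c • orderedProd T n := by
    obtain ⟨n, rfl⟩ := Nat.exists_eq_succ_of_ne_zero (NeZero.ne n)
    have hlast (j : Fin n.succ) : (j : ℕ) = n ↔ j = Fin.last n := by simp [Fin.ext_iff]
    ext a b
    simp [E, F, mul_apply, Fintype.sum_prod_type, orderedProd, hlast, Finset.mul_sum, mul_assoc]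
  rw [hfactor, det_mul, hL_det, one_mul, det_one_sub_mul_comm, hEF]

lemma det_one_sub_kronecker_mul_companion {o : Type*} [Fintype o] [DecidableEq o]
    (S : Matrix o o R) (P Q : o → Matrix k k R) :
    (1 - ((1 : Matrix (k ⊕ k) (k ⊕ k) R) ⊗ₖ S) *
        blockDiagonal (fun i => fromBlocks 0 1 (P i) (Q i))).det =
      (1 - ((1 : Matrix k k R) ⊗ₖ S) * blockDiagonal Q -
        (1 ⊗ₖ S) * blockDiagonal P * ((1 : Matrix k k R) ⊗ₖ S)).det := by
  have hblocks : 1 - ((1 : Matrix (k ⊕ k) (k ⊕ k) R) ⊗ₖ S) *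
        blockDiagonal (fun i => fromBlocks 0 1 (P i) (Q i)) =
      (fromBlocks 1 (-((1 : Matrix k k R) ⊗ₖ S)) (-((1 ⊗ₖ S) * blockDiagonal P))
        (1 - (1 ⊗ₖ S) * blockDiagonal Q)).submatrix
        (Equiv.sumProdDistrib k k o) (Equiv.sumProdDistrib k k o) := by
    ext ⟨a | a, i⟩ ⟨b | b, j⟩ <;>
      simp [one_kronecker_mul_blockDiagonal_apply, one_apply, mul_comm]
  rw [hblocks, det_submatrix_equiv_self, det_fromBlocks_one₁₁, neg_mul_neg]

end CyclicProduct

section HillFormula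

section CommRing

variable {R k : Type*} [CommRing R] [Fintype k] [DecidableEq k] {n : ℕ} [NeZero n]

lemma one_sub_twistedShift_mul_eq_neg_mul_twistedHessian {A B : ℤ → Matrix k k R} {c d : R}
    (hcd : c * d = 1) (hB : ∀ i, IsUnit (B i).det) :
    1 - ((1 : Matrix k k R) ⊗ₖ twistedShift n c) *
          blockDiagonal (fun i : Fin n => ((B (i : ℕ))ᵀ)⁻¹ * A (i : ℕ)) -
        ((1 : Matrix k k R) ⊗ₖ twistedShift n c) *
          blockDiagonal (fun i : Fin n => -(((B (i : ℕ))ᵀ)⁻¹ * B ((i : ℕ) - 1))) *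
          ((1 : Matrix k k R) ⊗ₖ twistedShift n c) =
      -(((1 : Matrix k k R) ⊗ₖ twistedShift n c) *
        blockDiagonal (fun i : Fin n => ((B (i : ℕ))ᵀ)⁻¹) * twistedHessian n c d A B) := by
  set Z := (1 : Matrix k k R) ⊗ₖ twistedShift n c
  set G := blockDiagonal (fun i : Fin n => ((B (i : ℕ))ᵀ)⁻¹)
  have hZ : Z * ((1 : Matrix k k R) ⊗ₖ (twistedShift n d)ᵀ) = 1 := by
    rw [← mul_kronecker_mul, Matrix.one_mul, twistedShift_mul_transpose hcd, one_kronecker_one]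
  have hG : G * blockDiagonal (fun i : Fin n => (B (i : ℕ))ᵀ) = 1 := by
    rw [← blockDiagonal_mul, ← blockDiagonal_one]
    congr 1 with i : 1
    exact nonsing_inv_mul _ (by rw [det_transpose]; exact hB i)
  have hneg : blockDiagonal (fun i : Fin n => -(((B (i : ℕ))ᵀ)⁻¹ * B ((i : ℕ) - 1))) =
      -(G * blockDiagonal (fun i : Fin n => B ((i : ℕ) - 1))) := by
    rw [← blockDiagonal_mul, ← blockDiagonal_neg]
    rfl
  have hGH : Z * G * twistedHessian n c d A B =
      Z * (G * blockDiagonal (fun i : Fin n => A (i : ℕ))) -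
        Z * (G * blockDiagonal (fun i : Fin n => B ((i : ℕ) - 1))) * Z - 1 := by
    rw [twistedHessian, Matrix.mul_sub, Matrix.mul_sub, ← hZ]
    simp only [Matrix.mul_assoc]
    rw [← Matrix.mul_assoc G (blockDiagonal fun i : Fin n => (B (i : ℕ))ᵀ), hG, Matrix.one_mul]
  rw [hGH, hneg, blockDiagonal_mul, Matrix.mul_neg, Matrix.neg_mul]
  abel

-- Hill's formula for the boundary multiplier `c`.
lemma prod_det_mul_det_one_sub_smul_orderedProd {A B : ℤ → Matrix k k R} {c d : R}
    (hcd : c * d = 1) (hB : ∀ i, IsUnit (B i).det) :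
    (∏ i : Fin n, (B (i : ℕ)).det) *
        (1 - c • orderedProd (fun i : ℕ => fromBlocks (0 : Matrix k k R) 1
          (-(((B i)ᵀ)⁻¹ * B (i - 1))) (((B i)ᵀ)⁻¹ * A i)) n).det =
      (-c) ^ Fintype.card k * (twistedHessian n c d A B).det := by
  have hsign : ((-1 : R) ^ n) * (-1) ^ (n - 1) = -1 := by
    obtain ⟨n, rfl⟩ := Nat.exists_eq_succ_of_ne_zero (NeZero.ne n)
    rw [Nat.succ_sub_one, pow_succ, mul_right_comm, ← mul_pow]
    simp
  have hprod : (∏ i : Fin n, (B (i : ℕ)).det) *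
      (blockDiagonal fun i : Fin n => ((B (i : ℕ))ᵀ)⁻¹).det = 1 := by
    rw [det_blockDiagonal, ← Finset.prod_mul_distrib]
    refine Finset.prod_eq_one fun i _ => ?_
    rw [← det_transpose, ← det_mul, mul_nonsing_inv _ (by rw [det_transpose]; exact hB i), det_one]
  have hcard : (-1 : R) ^ (Fintype.card k * n) * ((-1) ^ (n - 1) * c) ^ Fintype.card k =
      (-c) ^ Fintype.card k := by
    rw [mul_comm (Fintype.card k), pow_mul, ← mul_pow, ← mul_assoc, hsign, neg_one_mul]
  rw [← det_one_sub_twistedShift_mul_blockDiagonal, det_one_sub_kronecker_mul_companion,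
    one_sub_twistedShift_mul_eq_neg_mul_twistedHessian hcd hB, det_neg, det_mul, det_mul,
    det_kronecker, det_one, one_pow, one_mul, det_twistedShift, Fintype.card_prod,
    Fintype.card_fin, ← hcard]
  linear_combination (-1 : R) ^ (Fintype.card k * n) * ((-1) ^ (n - 1) * c) ^ Fintype.card k *
    (twistedHessian n c d A B).det * hprod

end CommRing

variable {m n : ℕ} {A B : ℤ → Matrix (Fin m) (Fin m) ℝ}

lemma monodromy_eq_orderedProd (A B : ℤ → Matrix (Fin m) (Fin m) ℝ) (n : ℕ) :
    monodromy m n A B = orderedProd (fun i : ℕ => transferMatrix m A B (i + 1 : ℕ)) n := by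
  simp only [monodromy, List.bind_eq_flatMap, List.pure_def, ← List.map_eq_flatMap, List.foldl_map,
    orderedProd_eq_foldl, Nat.cast_succ]

lemma transferMatrix_add_period (hA : ∀ i, A (i + n) = A i) (hB : ∀ i, B (i + n) = B i) (i : ℤ) :
    transferMatrix m A B (i + n) = transferMatrix m A B i := by
  rw [transferMatrix, transferMatrix, add_sub_right_comm, hA, hB, hB]

variable [NeZero n]

lemma prod_det_mul_det_one_add_monodromy (hA : ∀ i, A (i + n) = A i) (hB : ∀ i, B (i + n) = B i)
    (hBinv : ∀ i, IsUnit (B i).det) :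
    (∏ i : Fin n, (B ((i : ℕ) : ℤ)).det) * (1 + monodromy m n A B).det =
      (hessianNeg m n A B).det := by
  -- `P = T_n ⋯ T_1`, whereas the sites of the Hessian run from `0` to `n - 1`: rotate the product.
  have hT : transferMatrix m A B (n : ℕ) = transferMatrix m A B (0 : ℕ) := by
    simpa using transferMatrix_add_period hA hB 0
  have hdet : (1 + monodromy m n A B).det =
      (1 - (-1 : ℝ) • orderedProd (fun i : ℕ => transferMatrix m A B i) n).det := by
    rw [monodromy_eq_orderedProd, ← det_one_sub_smul_orderedProd_rotate
      (fun i : ℕ => transferMatrix m A B i) hT, neg_one_smul, sub_neg_eq_add]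
  rw [hdet, hessianNeg_eq_twistedHessian, det_submatrix_equiv_self]
  simpa [transferMatrix] using
    prod_det_mul_det_one_sub_smul_orderedProd (n := n) (A := A) (c := -1) (d := -1)
      (by norm_num) hBinv

end HillFormula

section RealEigenvalue

open Polynomial in
lemma exists_isRoot_gt_of_monic_of_eval_neg {p : ℝ[X]} (hp : p.Monic) {a : ℝ} (ha : p.eval a < 0) :
    ∃ x, a < x ∧ p.IsRoot x := by
  have hdeg : 0 < p.degree := by
    refine Polynomial.natDegree_pos_iff_degree_pos.mp (Nat.pos_of_ne_zero fun h => ?_)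
    rw [hp.natDegree_eq_zero.mp h, eval_one] at ha
    linarith
  have htop := p.tendsto_atTop_of_leadingCoeff_nonneg hdeg (hp.leadingCoeff ▸ zero_le_one)
  obtain ⟨b, hb, hab⟩ := ((htop.eventually_gt_atTop 0).and (Filter.eventually_gt_atTop a)).exists
  obtain ⟨x, hx, hroot⟩ := intermediate_value_Ioo hab.le p.continuousOn ⟨ha, hb⟩
  exact ⟨x, hx.1, hroot⟩

lemma exists_det_sub_smul_one_eq_zero {ι : Type*} [Fintype ι] [DecidableEq ι] {P : Matrix ι ι ℝ}
    (hP : (1 + P).det < 0) : ∃ ρ : ℝ, ρ < -1 ∧ (P - ρ • 1).det = 0 := by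
  have heval (x : ℝ) : (-P).charpoly.eval x = (x • 1 + P).det := by
    rw [eval_charpoly, scalar_apply, ← smul_one_eq_diagonal, sub_neg_eq_add]
  obtain ⟨x, hx, hroot⟩ := exists_isRoot_gt_of_monic_of_eval_neg (-P).charpoly_monic (a := 1)
    (by rwa [heval, one_smul])
  refine ⟨-x, neg_lt_neg hx, ?_⟩
  rw [neg_smul, sub_neg_eq_add, add_comm, ← heval]
  exact hroot

end RealEigenvalue

lemma neg_of_sign_mul_neg_one_pow_neg {b d : ℝ} {j : ℕ} (hpos : 0 < (-1) ^ j * (b * d))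
    (hneg : Real.sign b * (-1) ^ j < 0) : d < 0 := by
  have hsq : ((-1 : ℝ) ^ j) * (-1) ^ j = 1 := by rw [← mul_pow]; simp
  have hprod : Real.sign b * b * d < 0 := by
    calc Real.sign b * b * d = Real.sign b * (-1) ^ j * ((-1) ^ j * (b * d)) := by
          linear_combination -(Real.sign b * b * d) * hsq
      _ < 0 := mul_neg_of_neg_of_pos hneg hpos
  exact neg_of_mul_neg_right hprod (Real.sign_mul_nonneg b)

/-- The index of the doubled system splits as `ind H⁽²⁾ = ind H + ind H₋₁`;
consequently if `H₋₁` is invertible and `σ · (-1)^{ind H⁽²⁾ - ind H} < 0`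
then the monodromy matrix has a real eigenvalue `ρ < -1`. -/
theorem doubled_index_and_instability (m n : ℕ) (hm : 0 < m) [NeZero n]
    (A B : ℤ → Matrix (Fin m) (Fin m) ℝ)
    (hAper : ∀ i, A (i + n) = A i) (hBper : ∀ i, B (i + n) = B i)
    (hAsym : ∀ i, (A i)ᵀ = A i) (hBinv : ∀ i, IsUnit (B i).det) :
    matIndex (hessian m (2 * n) A B)
      = matIndex (hessian m n A B) + matIndex (hessianNeg m n A B) ∧
    (IsUnit (hessianNeg m n A B).det →
      Real.sign (∏ i : Fin n, (B ((i : ℕ) : ℤ)).det) *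
        (-1 : ℝ) ^ (matIndex (hessian m (2 * n) A B) - matIndex (hessian m n A B)) < 0 →
      ∃ ρ : ℝ, ρ < -1 ∧ (monodromy m n A B - ρ • 1).det = 0) := by
  have hindex := matIndex_hessian_two_mul (n := n) hAper hBper
  refine ⟨hindex, fun hdet hsign => exists_det_sub_smul_one_eq_zero ?_⟩
  have hpos := neg_one_pow_matIndex_mul_det_pos (isHermitian_hessianNeg hAsym hBper) hdet
  rw [← prod_det_mul_det_one_add_monodromy hAper hBper hBinv] at hpos
  rw [hindex, Nat.add_sub_cancel_left] at hsign
  exact neg_of_sign_mul_neg_one_pow_neg hpos hsign
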